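/- Let E be a finite-dimensional real inner product space, H : E → E → ℝ, and g : E → E → E be such that for all θ and w, g θ w is the gradient at w of the map w' ↦ H θ w'. Assume: (i) there is F_θ ≥ 0 such that ‖g θ₁ w − g θ₂ w‖ ≤ F_θ‖θ₁ − θ₂‖ for all θ₁, θ₂, w; (ii) there is F_w > 0 such that H θ w₂ ≥ H θ w₁ + ⟪g θ w₁, w₂ − w₁⟫ + (F_w/2)‖w₂ − w₁‖² for all θ, w₁, w₂; (iii) there is L > 0 such that H θ w₂ ≤ H θ w₁ + ⟪g θ w₁, w₂ − w₁⟫ + (L/2)‖w₂ − w₁‖² for all θ, w₁, w₂. Let θ* satisfy g θ* θ* = 0, and let θ, w ∈ E with w' = w − (1/L) · g θ w. Then ‖w' − θ*‖² ≤ (1 − F_w/L)‖w − θ*‖² + (F_θ² / (L F_w))‖θ − θ*‖². -/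

import Mathlib

open RealInnerProductSpace

/-!
With the target parameter `θ` fixed, a gradient step on `f = H θ` from `w` to `w'` can be measured
against any reference point `z`, not only the minimizer of `f`. Strong convexity at `w` and the
descent of the step give `‖w' - z‖² ≤ (1 - μ / L) ‖w - z‖² + (2 / L) (f z - f w')`, and strong
convexity at `z` bounds the excess `f z - f w'` by `‖∇f z‖² / (2 μ)`. For `z = θ*` the gradient
`∇f z = g θ θ*` vanishes when `θ = θ*`, so it is at most `F_θ ‖θ - θ*‖`.
-/

section GradientStep

variable {E : Type*} [NormedAddCommGroup E] [InnerProductSpace ℝ E]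

lemma neg_norm_sq_div_le_inner_add_norm_sq {μ : ℝ} (hμ : 0 < μ) (v u : E) :
    -(‖v‖ ^ 2 / (2 * μ)) ≤ ⟪v, u⟫ + μ / 2 * ‖u‖ ^ 2 := by
  have complete_square :
      ⟪v, u⟫ + μ / 2 * ‖u‖ ^ 2 + ‖v‖ ^ 2 / (2 * μ) = ‖v + μ • u‖ ^ 2 / (2 * μ) := by
    rw [norm_add_sq_real, real_inner_smul_right, norm_smul, mul_pow, Real.norm_eq_abs, sq_abs]
    field_simp
    ring
  have : 0 ≤ ‖v + μ • u‖ ^ 2 / (2 * μ) := by positivity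
  linarith

variable {f : E → ℝ} {f' : E → E} {μ L : ℝ}

lemma sub_le_norm_gradient_sq_div (hμ : 0 < μ) {z y : E}
    (hlower : f z + ⟪f' z, y - z⟫ + μ / 2 * ‖y - z‖ ^ 2 ≤ f y) :
    f z - f y ≤ ‖f' z‖ ^ 2 / (2 * μ) := by
  linarith [neg_norm_sq_div_le_inner_add_norm_sq hμ (f' z) (y - z)]

lemma apply_gradient_step_le (hL : 0 < L) {x : E}
    (hupper : ∀ y, f y ≤ f x + ⟪f' x, y - x⟫ + L / 2 * ‖y - x‖ ^ 2) :
    f (x - (1 / L) • f' x) ≤ f x - ‖f' x‖ ^ 2 / (2 * L) := by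
  calc f (x - (1 / L) • f' x)
      ≤ f x + ⟪f' x, -((1 / L) • f' x)⟫ + L / 2 * ‖-((1 / L) • f' x)‖ ^ 2 := by
        simpa only [sub_sub_cancel_left] using hupper (x - (1 / L) • f' x)
    _ = f x - ‖f' x‖ ^ 2 / (2 * L) := by
        rw [inner_neg_right, real_inner_smul_right, real_inner_self_eq_norm_sq, norm_neg,
          norm_smul, mul_pow, Real.norm_eq_abs, sq_abs]
        field_simp
        ring

lemma norm_sub_smul_sub_sq (x z v : E) (a : ℝ) :
    ‖x - a • v - z‖ ^ 2 = ‖x - z‖ ^ 2 + 2 * a * ⟪v, z - x⟫ + a ^ 2 * ‖v‖ ^ 2 := by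
  rw [sub_right_comm, norm_sub_sq_real, real_inner_smul_right, real_inner_comm, norm_smul,
    mul_pow, Real.norm_eq_abs, sq_abs, ← neg_sub x z, inner_neg_right]
  ring

lemma norm_gradient_step_sub_sq_le_add_sub (hL : 0 < L) {x z : E}
    (hlower : f x + ⟪f' x, z - x⟫ + μ / 2 * ‖z - x‖ ^ 2 ≤ f z)
    (hupper : ∀ y, f y ≤ f x + ⟪f' x, y - x⟫ + L / 2 * ‖y - x‖ ^ 2) :
    ‖x - (1 / L) • f' x - z‖ ^ 2 ≤
      (1 - μ / L) * ‖x - z‖ ^ 2 + 2 / L * (f z - f (x - (1 / L) • f' x)) := by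
  have hdescent := apply_gradient_step_le hL hupper
  have hinner : ⟪f' x, z - x⟫ + ‖f' x‖ ^ 2 / (2 * L) ≤
      f z - f (x - (1 / L) • f' x) - μ / 2 * ‖x - z‖ ^ 2 := by
    rw [norm_sub_rev x z]
    linarith
  calc ‖x - (1 / L) • f' x - z‖ ^ 2
      = ‖x - z‖ ^ 2 + 2 / L * (⟪f' x, z - x⟫ + ‖f' x‖ ^ 2 / (2 * L)) := by
        rw [norm_sub_smul_sub_sq]
        field_simp
        ring
    _ ≤ ‖x - z‖ ^ 2 +
          2 / L * (f z - f (x - (1 / L) • f' x) - μ / 2 * ‖x - z‖ ^ 2) := by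
        gcongr
    _ = (1 - μ / L) * ‖x - z‖ ^ 2 + 2 / L * (f z - f (x - (1 / L) • f' x)) := by
        ring

theorem norm_gradient_step_sub_sq_le (hμ : 0 < μ) (hL : 0 < L)
    (hlower : ∀ x y, f x + ⟪f' x, y - x⟫ + μ / 2 * ‖y - x‖ ^ 2 ≤ f y)
    (hupper : ∀ x y, f y ≤ f x + ⟪f' x, y - x⟫ + L / 2 * ‖y - x‖ ^ 2) (x z : E) :
    ‖x - (1 / L) • f' x - z‖ ^ 2 ≤
      (1 - μ / L) * ‖x - z‖ ^ 2 + ‖f' z‖ ^ 2 / (L * μ) := by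
  calc ‖x - (1 / L) • f' x - z‖ ^ 2
      ≤ (1 - μ / L) * ‖x - z‖ ^ 2 + 2 / L * (f z - f (x - (1 / L) • f' x)) :=
        norm_gradient_step_sub_sq_le_add_sub hL (hlower x z) (hupper x)
    _ ≤ (1 - μ / L) * ‖x - z‖ ^ 2 + 2 / L * (‖f' z‖ ^ 2 / (2 * μ)) := by
        gcongr
        exact sub_le_norm_gradient_sq_div hμ (hlower z _)
    _ = (1 - μ / L) * ‖x - z‖ ^ 2 + ‖f' z‖ ^ 2 / (L * μ) := by
        field_simp

end GradientStep

/- The gradient is expressed through `innerSL` because `HasGradientAt` is only available in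
complete spaces. -/
theorem stmt_8_general {E : Type*} [NormedAddCommGroup E] [InnerProductSpace ℝ E]
    (H : E → E → ℝ) (g : E → E → E)
    (_hgrad : ∀ θ w, HasFDerivAt (H θ) (innerSL ℝ (g θ w)) w)
    (Fθ Fw L : ℝ) (hFw : 0 < Fw) (hL : 0 < L)
    (hLipθ : ∀ θ₁ θ₂ w, ‖g θ₁ w - g θ₂ w‖ ≤ Fθ * ‖θ₁ - θ₂‖)
    (hsc : ∀ θ w₁ w₂, H θ w₁ + ⟪g θ w₁, w₂ - w₁⟫ + Fw / 2 * ‖w₂ - w₁‖ ^ 2 ≤ H θ w₂)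
    (hsm : ∀ θ w₁ w₂, H θ w₂ ≤ H θ w₁ + ⟪g θ w₁, w₂ - w₁⟫ + L / 2 * ‖w₂ - w₁‖ ^ 2)
    (θstar : E) (hfix : g θstar θstar = 0)
    (θ w w' : E) (hw' : w' = w - (1 / L) • g θ w) :
    ‖w' - θstar‖ ^ 2 ≤
      (1 - Fw / L) * ‖w - θstar‖ ^ 2 + Fθ ^ 2 / (L * Fw) * ‖θ - θstar‖ ^ 2 := by
  subst hw'
  have hgrad_le : ‖g θ θstar‖ ≤ Fθ * ‖θ - θstar‖ := by
    simpa only [hfix, sub_zero] using hLipθ θ θstar θstar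
  calc ‖w - (1 / L) • g θ w - θstar‖ ^ 2
      ≤ (1 - Fw / L) * ‖w - θstar‖ ^ 2 + ‖g θ θstar‖ ^ 2 / (L * Fw) :=
        norm_gradient_step_sub_sq_le hFw hL (hsc θ) (hsm θ) w θstar
    _ ≤ (1 - Fw / L) * ‖w - θstar‖ ^ 2 + (Fθ * ‖θ - θstar‖) ^ 2 / (L * Fw) := by
        gcongr
    _ = (1 - Fw / L) * ‖w - θstar‖ ^ 2 + Fθ ^ 2 / (L * Fw) * ‖θ - θstar‖ ^ 2 := by
        ring

theorem stmt_8 {E : Type*} [NormedAddCommGroup E] [InnerProductSpace ℝ E]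
    [FiniteDimensional ℝ E]
    (H : E → E → ℝ) (g : E → E → E)
    (hgrad : ∀ θ w, HasGradientAt (H θ) (g θ w) w)
    (Fθ Fw L : ℝ) (hFθ : 0 ≤ Fθ) (hFw : 0 < Fw) (hL : 0 < L)
    (hLipθ : ∀ θ₁ θ₂ w, ‖g θ₁ w - g θ₂ w‖ ≤ Fθ * ‖θ₁ - θ₂‖)
    (hsc : ∀ θ w₁ w₂, H θ w₁ + ⟪g θ w₁, w₂ - w₁⟫ + Fw / 2 * ‖w₂ - w₁‖ ^ 2 ≤ H θ w₂)
    (hsm : ∀ θ w₁ w₂, H θ w₂ ≤ H θ w₁ + ⟪g θ w₁, w₂ - w₁⟫ + L / 2 * ‖w₂ - w₁‖ ^ 2)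
    (θstar : E) (hfix : g θstar θstar = 0)
    (θ w w' : E) (hw' : w' = w - (1 / L) • g θ w) :
    ‖w' - θstar‖ ^ 2 ≤
      (1 - Fw / L) * ‖w - θstar‖ ^ 2 + Fθ ^ 2 / (L * Fw) * ‖θ - θstar‖ ^ 2 :=
  stmt_8_general H g (fun θ w => (hgrad θ w).hasFDerivAt) Fθ Fw L hFw hL hLipθ hsc hsm
    θstar hfix θ w w' hw'
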